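/- arXiv:2501.09500 — 6 statements merged into one kernel-verified Lean document; each statement's English description precedes it below -/
import Mathlib

section
/- Define K : ℝ × ℝ → ℝ by K(x, y) = 1 + (x − 1/2)(y − 1/2) + (|x − y|² − |x − y| + 1/6)/2. Then for every integer n ≥ 1, ∑_{k=0}^{n-1} ∑_{k'=0}^{n-1} K(k/n, k'/n) = (3n² + 1)/3. -/
/-- The reproducing kernel `K^1_{1,1}` of the first-order unweighted Sobolev
space on `[0,1]`. -/
noncomputable def sobKernel (x y : ℝ) : ℝ :=
  1 + (x - 1/2) * (y - 1/2) + (|x - y| ^ 2 - |x - y| + 1/6) / 2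

/-!
The kernel equals `4/3 + (x² + y²)/2 - max x y`. For increasing nodes `x 0, …, x (n - 1)` the value
`x k` is the maximum of exactly `2k + 1` ordered pairs, so the Gram sum is quadratic in the nodes,
and completing the square turns it into `n² + 1/12 + n ∑ (x k - (2k + 1)/(2n))²`. The last term
measures the distance to the midpoints, which is `1/(2n)` at every left endpoint `k/n`.
-/

open Finset

lemma sum_range_sum_range_max_of_monotoneOn {M : Type*} [AddCommMonoid M] [LinearOrder M]
    {f : ℕ → M} {n : ℕ} (hf : MonotoneOn f (Set.Iio n)) :
    ∑ k ∈ range n, ∑ l ∈ range n, max (f k) (f l) = ∑ k ∈ range n, (2 * k + 1) • f k := by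
  induction n with
  | zero => simp
  | succ n ih =>
    have max_last : ∀ k ∈ range n, max (f k) (f n) = f n := fun k hk ↦ by
      have hkn : k < n := mem_range.mp hk
      exact max_eq_right (hf (hkn.trans n.lt_succ_self) n.lt_succ_self hkn.le)
    have last_column : ∑ k ∈ range n, max (f k) (f n) = n • f n := by
      rw [sum_congr rfl max_last, sum_const, card_range]
    have last_row : ∑ l ∈ range n, max (f n) (f l) = n • f n := by
      simpa only [max_comm] using last_column
    have inner_square := ih (hf.mono (Set.Iio_subset_Iio n.le_succ))
    simp only [sum_range_succ, sum_add_distrib, inner_square, last_column, last_row, max_self]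
    rw [add_assoc, ← add_assoc (n • f n), ← add_nsmul, ← succ_nsmul, two_mul]

lemma three_mul_sum_range_odd_sq {R : Type*} [CommRing R] (n : ℕ) :
    3 * ∑ k ∈ range n, (2 * k + 1 : R) ^ 2 = n * (4 * n ^ 2 - 1) := by
  induction n with
  | zero => simp
  | succ n ih =>
    rw [sum_range_succ, mul_add, ih]
    push_cast
    ring

lemma sobKernel_eq_max (x y : ℝ) :
    sobKernel x y = 4 / 3 + (x ^ 2 + y ^ 2) / 2 - max x y := by
  rw [sobKernel, sq_abs, sup_eq_half_smul_add_add_abs_sub' ℝ x y, abs_sub_comm y x, smul_eq_mul]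
  ring

lemma sum_sobKernel_of_monotoneOn {x : ℕ → ℝ} {n : ℕ} (hx : MonotoneOn x (Set.Iio n)) :
    ∑ k ∈ range n, ∑ l ∈ range n, sobKernel (x k) (x l) =
      4 / 3 * n ^ 2 + n * ∑ k ∈ range n, x k ^ 2 - ∑ k ∈ range n, (2 * k + 1) * x k := by
  have sum_max : ∑ k ∈ range n, ∑ l ∈ range n, max (x k) (x l) =
      ∑ k ∈ range n, (2 * k + 1) * x k := by
    simpa [nsmul_eq_mul] using sum_range_sum_range_max_of_monotoneOn hx
  simp only [sobKernel_eq_max, sum_sub_distrib, sum_max, sum_add_distrib, ← sum_div,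
    sum_const, card_range, nsmul_eq_mul, ← mul_sum]
  ring

lemma sum_sobKernel_eq_sum_sq_sub_midpoint {x : ℕ → ℝ} {n : ℕ} (hn : n ≠ 0)
    (hx : MonotoneOn x (Set.Iio n)) :
    ∑ k ∈ range n, ∑ l ∈ range n, sobKernel (x k) (x l) =
      n ^ 2 + 1 / 12 + n * ∑ k ∈ range n, (x k - (2 * k + 1) / (2 * n)) ^ 2 := by
  have hn' : (n : ℝ) ≠ 0 := Nat.cast_ne_zero.mpr hn
  have expand_square (k : ℕ) : n * (x k - (2 * k + 1) / (2 * n)) ^ 2 =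
      n * x k ^ 2 - (2 * k + 1) * x k + (2 * k + 1) ^ 2 / (4 * n) := by
    field_simp
    ring
  have sum_odd_sq : (∑ k ∈ range n, (2 * k + 1 : ℝ) ^ 2) / (4 * n) = (4 * n ^ 2 - 1) / 12 := by
    field_simp
    linarith [three_mul_sum_range_odd_sq (R := ℝ) n]
  rw [sum_sobKernel_of_monotoneOn hx]
  simp only [mul_sum, expand_square, sum_add_distrib, sum_sub_distrib, ← sum_div, sum_odd_sq]
  ring

/-- Section 3.1: Gram-sum identity `∑_{k,k'} K(k/n, k'/n) = (3n² + 1)/3` for the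
one-dimensional lattice (left-Riemann) nodes. -/
theorem stmt_9 (n : ℕ) (hn : 1 ≤ n) :
    ∑ k ∈ Finset.range n, ∑ k' ∈ Finset.range n,
        sobKernel ((k : ℝ) / n) ((k' : ℝ) / n) = (3 * (n : ℝ) ^ 2 + 1) / 3 := by
  have hn0 : n ≠ 0 := Nat.one_le_iff_ne_zero.mp hn
  have nodes_mono : Monotone fun k : ℕ ↦ (k : ℝ) / n := fun _ _ h ↦ by
    dsimp only
    gcongr
  have midpoint_offset (k : ℕ) : (k : ℝ) / n - (2 * k + 1) / (2 * n) = -1 / (2 * n) := by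
    field_simp
    ring
  rw [sum_sobKernel_eq_sum_sq_sub_midpoint hn0 (nodes_mono.monotoneOn _)]
  simp only [midpoint_offset, sum_const, card_range, nsmul_eq_mul]
  field_simp
  ring
end

section
/- Define K : ℝ × ℝ → ℝ by K(x, y) = 1 + (x − 1/2)(y − 1/2) + (|x − y|² − |x − y| + 1/6)/2. Fix an integer n ≥ 2 and define weights w*_0 = 6n²/(12n³ + n + 3), w*_k = 12n²/(12n³ + n + 3) for 1 ≤ k ≤ n − 2, and w*_{n-1} = 18n²/(12n³ + n + 3). Then 1 − ∑_{k=0}^{n-1} w*_k K(1, k/n) = 6n/(12n³ + n + 3). -/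
/-- The optimal kernel cubature weights for the left-Riemann nodes `t_k = k/n`. -/
noncomputable def wstar (n k : ℕ) : ℝ :=
  if k = 0 then 6 * (n : ℝ) ^ 2 / (12 * (n : ℝ) ^ 3 + n + 3)
  else if k = n - 1 then 18 * (n : ℝ) ^ 2 / (12 * (n : ℝ) ^ 3 + n + 3)
  else 12 * (n : ℝ) ^ 2 / (12 * (n : ℝ) ^ 3 + n + 3)

/-! The weights are the constant `12n²/(12n³ + n + 3)` with half of it moved from the first node to
the last, so weighted sums reduce to plain sums with an endpoint correction. Since
`K(x, y) = 4/3 - max x y + (x² + y²)/2`, the kernel section at `x = 1` is `5/6 + y²/2` on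
`y ≤ 1`, and only the zeroth and second moments of the weights enter. -/

lemma sobKernel_eq_sub_max (x y : ℝ) :
    sobKernel x y = 4 / 3 - max x y + (x ^ 2 + y ^ 2) / 2 := by
  rw [sobKernel, sq_abs, sup_eq_half_smul_add_add_abs_sub' ℝ, abs_sub_comm y x, smul_eq_mul]
  ring

lemma sobKernel_one_left {y : ℝ} (hy : y ≤ 1) : sobKernel 1 y = 5 / 6 + y ^ 2 / 2 := by
  rw [sobKernel_eq_sub_max, max_eq_left hy]
  ring

lemma sum_range_natCast_sq {F : Type*} [Field F] [CharZero F] (n : ℕ) :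
    ∑ k ∈ Finset.range n, (k : F) ^ 2 = n * (n - 1) * (2 * n - 1) / 6 := by
  induction n with
  | zero => simp
  | succ n ih =>
    rw [Finset.sum_range_succ, ih]
    push_cast
    ring

lemma wstar_eq_mul {n : ℕ} (hn : 2 ≤ n) (k : ℕ) :
    wstar n k = 12 * (n : ℝ) ^ 2 / (12 * (n : ℝ) ^ 3 + n + 3) *
      (1 + ((if k = n - 1 then 1 else 0) - (if k = 0 then 1 else 0)) / 2) := by
  unfold wstar
  split_ifs <;> first | omega | ring

lemma sum_wstar_mul {n : ℕ} (hn : 2 ≤ n) (f : ℕ → ℝ) :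
    ∑ k ∈ Finset.range n, wstar n k * f k =
      12 * (n : ℝ) ^ 2 / (12 * (n : ℝ) ^ 3 + n + 3) *
        (∑ k ∈ Finset.range n, f k + (f (n - 1) - f 0) / 2) := by
  have hfirst : 0 ∈ Finset.range n := Finset.mem_range.2 (by omega)
  have hlast : n - 1 ∈ Finset.range n := Finset.mem_range.2 (by omega)
  simp_rw [wstar_eq_mul hn, mul_assoc, ← Finset.mul_sum, add_mul, one_mul,
    div_mul_eq_mul_div, sub_mul, ite_mul, one_mul, zero_mul]
  rw [Finset.sum_add_distrib, ← Finset.sum_div, Finset.sum_sub_distrib, Finset.sum_ite_eq',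
    Finset.sum_ite_eq', if_pos hfirst, if_pos hlast]

lemma sum_wstar {n : ℕ} (hn : 2 ≤ n) :
    ∑ k ∈ Finset.range n, wstar n k = 12 * (n : ℝ) ^ 3 / (12 * (n : ℝ) ^ 3 + n + 3) := by
  have h := sum_wstar_mul hn fun _ => 1
  simp only [mul_one, Finset.sum_const, Finset.card_range, nsmul_eq_mul, sub_self, zero_div,
    add_zero] at h
  rw [h]
  ring

lemma sum_wstar_mul_node_sq {n : ℕ} (hn : 2 ≤ n) :
    ∑ k ∈ Finset.range n, wstar n k * ((k : ℝ) / n) ^ 2 =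
      2 * ((n : ℝ) - 1) * (2 * (n : ℝ) ^ 2 + 2 * n - 3) / (12 * (n : ℝ) ^ 3 + n + 3) := by
  have hn_ne : (n : ℝ) ≠ 0 := by positivity
  have hnodes : ∑ k ∈ Finset.range n, ((k : ℝ) / n) ^ 2 =
      ((n : ℝ) - 1) * (2 * n - 1) / (6 * n) := by
    simp_rw [div_pow, ← Finset.sum_div, sum_range_natCast_sq]
    field_simp
  rw [sum_wstar_mul hn fun k => ((k : ℝ) / n) ^ 2, hnodes, Nat.cast_pred (by omega), Nat.cast_zero]
  field_simp
  ring

/-- Boundary-defect identity at `x = 1` from the proof of Lemma 2: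
`1 − ∑_k w*_k K(1, k/n) = 6n/(12n³ + n + 3)`. -/
theorem stmt_12 (n : ℕ) (hn : 2 ≤ n) :
    1 - ∑ k ∈ Finset.range n, wstar n k * sobKernel 1 ((k : ℝ) / n)
      = 6 * (n : ℝ) / (12 * (n : ℝ) ^ 3 + n + 3) := by
  have hkernel (k : ℕ) (hk : k ∈ Finset.range n) :
      wstar n k * sobKernel 1 ((k : ℝ) / n) =
        5 / 6 * wstar n k + wstar n k * ((k : ℝ) / n) ^ 2 / 2 := by
    have hnode : (k : ℝ) / n ≤ 1 :=
      div_le_one_of_le₀ (Nat.cast_le.2 (Finset.mem_range.1 hk).le) n.cast_nonneg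
    rw [sobKernel_one_left hnode]
    ring
  rw [Finset.sum_congr rfl hkernel, Finset.sum_add_distrib, ← Finset.mul_sum, ← Finset.sum_div,
    sum_wstar hn, sum_wstar_mul_node_sq hn]
  field_simp
  ring
end

section
/- Define K : ℝ × ℝ → ℝ by K(x, y) = 1 + (x − 1/2)(y − 1/2) + (|x − y|² − |x − y| + 1/6)/2. Then for all a, b ∈ [0,1], ∫_0^1 K(x, a) K(x, b) dx = 46/45 − a²/6 + a³/12 − a⁴/24 + a²b/4 − b²/6 + a b²/4 − a² b²/4 + b³/12 − b⁴/24 + |a − b|³/12. -/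
open MeasureTheory

/-!
The kernel section `K(·, a)` is a Neumann Green's function on `[0,1]`: its derivative is `x` to the
left of `a` and `x - 1` to the right, so its second derivative is `1 - δ_a`. Integrating by parts
twice gives `∫ K(·, a) f'' = ∫ f - f(a) + K(1, a) f'(1) - K(0, a) f'(0)`, so the inner product with
`K(·, b)` is read off from a second antiderivative of `K(·, b)`. The kink `-|x - b| / 2` of that
section integrates twice to `-|x - b| ^ 3 / 12`, whose value at `a` is the source of the term
`|a - b| ^ 3 / 12`.
-/

open Set

section AbsPow

theorem hasDerivAt_mul_abs_pow (n : ℕ) (x : ℝ) :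
    HasDerivAt (fun t : ℝ => t * |t| ^ n) ((n + 1) * |x| ^ n) x := by
  refine hasDerivAt_of_hasDerivAt_of_ne' (x := 0) (g := fun t => (n + 1) * |t| ^ n)
    (fun t ht => ?_) (by fun_prop) (by fun_prop) x
  refine ((hasDerivAt_id t).mul ((hasDerivAt_abs ht).pow n)).congr_deriv ?_
  cases n with
  | zero => simp
  | succ n =>
    simp only [id_eq, Pi.pow_apply, Nat.add_sub_cancel, Nat.cast_succ]
    linear_combination (n + 1) * |t| ^ n * self_mul_sign t

theorem hasDerivAt_abs_pow_add_two (n : ℕ) (x : ℝ) :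
    HasDerivAt (fun t : ℝ => |t| ^ (n + 2)) ((n + 2) * (x * |x| ^ n)) x := by
  have habs (t : ℝ) : |t| ^ (n + 2) = t * (t * |t| ^ n) := by
    rw [pow_add, sq_abs]
    ring
  simp_rw [habs]
  refine ((hasDerivAt_id x).mul (hasDerivAt_mul_abs_pow n x)).congr_deriv ?_
  simp only [id_eq]
  ring

end AbsPow

section GreenRepresentation

variable {E : Type*} [NormedAddCommGroup E] [NormedSpace ℝ E] [CompleteSpace E]

theorem montgomery_identity {f f' : ℝ → E} {u v a : ℝ} (ha : a ∈ uIcc u v)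
    (hf : ∀ x ∈ uIcc u v, HasDerivAt f (f' x) x) (hf' : IntervalIntegrable f' volume u v) :
    (∫ x in u..a, (x - u) • f' x) + ∫ x in a..v, (x - v) • f' x =
      (v - u) • f a - ∫ x in u..v, f x := by
  have hleft := uIcc_subset_uIcc_left ha
  have hright := uIcc_subset_uIcc_right ha
  have hcont : ContinuousOn f (uIcc u v) := HasDerivAt.continuousOn hf
  have parts_left : ∫ x in u..a, (x - u) • f' x =
      (a - u) • f a - (u - u) • f u - ∫ x in u..a, (1 : ℝ) • f x :=
    intervalIntegral.integral_smul_deriv_eq_deriv_smul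
      (fun x _ => (hasDerivAt_id x).sub_const u) (fun x hx => hf x (hleft hx))
      intervalIntegrable_const (hf'.mono_set hleft)
  have parts_right : ∫ x in a..v, (x - v) • f' x =
      (v - v) • f v - (a - v) • f a - ∫ x in a..v, (1 : ℝ) • f x :=
    intervalIntegral.integral_smul_deriv_eq_deriv_smul
      (fun x _ => (hasDerivAt_id x).sub_const v) (fun x hx => hf x (hright hx))
      intervalIntegrable_const (hf'.mono_set hright)
  rw [parts_left, parts_right, ← intervalIntegral.integral_add_adjacent_intervals
    (hcont.mono hleft).intervalIntegrable (hcont.mono hright).intervalIntegrable]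
  simp only [one_smul]
  module

theorem continuous_sobKernel_left (y : ℝ) : Continuous fun x => sobKernel x y := by
  unfold sobKernel
  fun_prop

theorem hasDerivAt_sobKernel_left {x y : ℝ} (h : x ≠ y) :
    HasDerivAt (fun t => sobKernel t y) (x - (1 + SignType.sign (x - y)) / 2) x := by
  simp only [sobKernel, sq_abs]
  have hsub : HasDerivAt (fun t => t - y) 1 x := (hasDerivAt_id x).sub_const y
  have habs : HasDerivAt (fun t => |t - y|) (SignType.sign (x - y) : ℝ) x :=
    (hasDerivAt_abs (sub_ne_zero.2 h)).comp_sub_const x y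
  refine (((((hasDerivAt_id x).sub_const (1/2)).mul_const (y - 1/2)).const_add 1).add
    ((((hsub.pow 2).sub habs).add_const (1/6)).div_const 2)).congr_deriv ?_
  push_cast
  ring

theorem hasDerivAt_sobKernel_left_of_lt {x y : ℝ} (h : x < y) :
    HasDerivAt (fun t => sobKernel t y) x x := by
  simpa [sign_neg (sub_neg.2 h)] using hasDerivAt_sobKernel_left h.ne

theorem hasDerivAt_sobKernel_left_of_gt {x y : ℝ} (h : y < x) :
    HasDerivAt (fun t => sobKernel t y) (x - 1) x := by
  simpa [sign_pos (sub_pos.2 h), one_add_one_eq_two] using hasDerivAt_sobKernel_left h.ne'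

theorem integral_sobKernel_smul_deriv_deriv {f f' f'' : ℝ → E} {a : ℝ} (ha : a ∈ Icc (0 : ℝ) 1)
    (hf : ∀ x ∈ Icc (0 : ℝ) 1, HasDerivAt f (f' x) x)
    (hf' : ∀ x ∈ Icc (0 : ℝ) 1, HasDerivAt f' (f'' x) x)
    (hf'' : IntervalIntegrable f'' volume 0 1) :
    ∫ x in (0 : ℝ)..1, sobKernel x a • f'' x =
      (∫ x in (0 : ℝ)..1, f x) - f a + sobKernel 1 a • f' 1 - sobKernel 0 a • f' 0 := by
  rw [← uIcc_of_le zero_le_one] at hf hf'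
  have ha_uIcc : a ∈ uIcc 0 1 := Icc_subset_uIcc ha
  have hleft := uIcc_subset_uIcc_left ha_uIcc
  have hright := uIcc_subset_uIcc_right ha_uIcc
  have hK (u v : ℝ) : ContinuousOn (fun x => sobKernel x a) (uIcc u v) :=
    (continuous_sobKernel_left a).continuousOn
  have hf'cont : ContinuousOn f' (uIcc 0 1) := HasDerivAt.continuousOn hf'
  have hint := hf''.continuousOn_smul (hK 0 1)
  have parts_left : ∫ x in (0 : ℝ)..a, sobKernel x a • f'' x =
      sobKernel a a • f' a - sobKernel 0 a • f' 0 - ∫ x in (0 : ℝ)..a, x • f' x :=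
    intervalIntegral.integral_smul_deriv_eq_deriv_smul_of_hasDerivAt (hK 0 a)
      (hf'cont.mono hleft)
      (fun x hx => hasDerivAt_sobKernel_left_of_lt (hx.2.trans_eq (max_eq_right ha.1)))
      (fun x hx => hf' x (hleft (Ioo_subset_Icc_self hx)))
      intervalIntegral.intervalIntegrable_id (hf''.mono_set hleft)
  have parts_right : ∫ x in a..1, sobKernel x a • f'' x =
      sobKernel 1 a • f' 1 - sobKernel a a • f' a - ∫ x in a..1, (x - 1) • f' x :=
    intervalIntegral.integral_smul_deriv_eq_deriv_smul_of_hasDerivAt (hK a 1)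
      (hf'cont.mono hright)
      (fun x hx => hasDerivAt_sobKernel_left_of_gt ((min_eq_left ha.2).symm.trans_lt hx.1))
      (fun x hx => hf' x (hright (Ioo_subset_Icc_self hx)))
      (Continuous.intervalIntegrable (by fun_prop) a 1) (hf''.mono_set hright)
  have montgomery := montgomery_identity ha_uIcc hf hf'cont.intervalIntegrable
  simp only [sub_zero, one_smul] at montgomery
  rw [← intervalIntegral.integral_add_adjacent_intervals (hint.mono_set hleft)
    (hint.mono_set hright), parts_left, parts_right]
  linear_combination (norm := module) -montgomery

end GreenRepresentation

/-- An antiderivative in `x` of the kernel section `sobKernel x b`, normalized to vanish at `x = 0`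
when `0 ≤ b`. -/
noncomputable def sobKernelPrimitive (b x : ℝ) : ℝ :=
  (4/3 + b ^ 2 / 2 - b / 2) * x + x ^ 3 / 6 - x ^ 2 / 4 - b ^ 2 / 4 - (x - b) * |x - b| / 4

/-- An antiderivative in `x` of `sobKernelPrimitive b x`, hence a second antiderivative of the
kernel section `sobKernel x b`. -/
noncomputable def sobKernelPotential (b x : ℝ) : ℝ :=
  (4/3 + b ^ 2 / 2 - b / 2) * x ^ 2 / 2 + x ^ 4 / 24 - x ^ 3 / 12 - b ^ 2 * x / 4
    - |x - b| ^ 3 / 12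

theorem sobKernelPrimitive_zero {b : ℝ} (hb : 0 ≤ b) : sobKernelPrimitive b 0 = 0 := by
  rw [sobKernelPrimitive, zero_sub, abs_neg, abs_of_nonneg hb]
  ring

theorem sobKernelPrimitive_one {b : ℝ} (hb : b ≤ 1) : sobKernelPrimitive b 1 = 1 := by
  rw [sobKernelPrimitive, abs_of_nonneg (sub_nonneg.2 hb)]
  ring

theorem hasDerivAt_sobKernelPrimitive (b x : ℝ) :
    HasDerivAt (sobKernelPrimitive b) (sobKernel x b) x := by
  have hkink : HasDerivAt (fun t => (t - b) * |t - b|) (2 * |x - b|) x := by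
    simpa [one_add_one_eq_two] using (hasDerivAt_mul_abs_pow 1 (x - b)).comp_sub_const x b
  refine ((((((hasDerivAt_id x).const_mul (4/3 + b ^ 2 / 2 - b / 2)).add
    ((hasDerivAt_pow 3 x).div_const 6)).sub ((hasDerivAt_pow 2 x).div_const 4)).sub_const
    (b ^ 2 / 4)).sub (hkink.div_const 4)).congr_deriv ?_
  rw [sobKernel, sq_abs]
  push_cast
  ring

theorem hasDerivAt_sobKernelPotential (b x : ℝ) :
    HasDerivAt (sobKernelPotential b) (sobKernelPrimitive b x) x := by
  have hkink : HasDerivAt (fun t => |t - b| ^ 3) (3 * ((x - b) * |x - b|)) x :=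
    ((hasDerivAt_abs_pow_add_two 1 (x - b)).comp_sub_const x b).congr_deriv (by norm_num)
  refine (((((((hasDerivAt_pow 2 x).const_mul (4/3 + b ^ 2 / 2 - b / 2)).div_const 2).add
    ((hasDerivAt_pow 4 x).div_const 24)).sub ((hasDerivAt_pow 3 x).div_const 12)).sub
    (((hasDerivAt_id x).const_mul (b ^ 2)).div_const 4)).sub
    (hkink.div_const 12)).congr_deriv ?_
  rw [sobKernelPrimitive]
  push_cast
  ring

theorem integral_sobKernelPotential {b : ℝ} (hb : b ∈ Icc (0 : ℝ) 1) :
    ∫ x in (0 : ℝ)..1, sobKernelPotential b x =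
      151/720 - b / 12 - b ^ 2 / 24 - (b ^ 4 + (1 - b) ^ 4) / 48 := by
  have hkink (x : ℝ) : HasDerivAt (fun t => (t - b) * |t - b| ^ 3) (4 * |x - b| ^ 3) x :=
    ((hasDerivAt_mul_abs_pow 3 (x - b)).comp_sub_const x b).congr_deriv (by norm_num)
  have hderiv (x : ℝ) : HasDerivAt
      (fun t => (4/3 + b ^ 2 / 2 - b / 2) * t ^ 3 / 6 + t ^ 5 / 120 - t ^ 4 / 48 - b ^ 2 * t ^ 2 / 8
        - (t - b) * |t - b| ^ 3 / 48) (sobKernelPotential b x) x := by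
    refine (((((((hasDerivAt_pow 3 x).const_mul (4/3 + b ^ 2 / 2 - b / 2)).div_const 6).add
      ((hasDerivAt_pow 5 x).div_const 120)).sub ((hasDerivAt_pow 4 x).div_const 48)).sub
      (((hasDerivAt_pow 2 x).const_mul (b ^ 2)).div_const 8)).sub
      ((hkink x).div_const 48)).congr_deriv ?_
    rw [sobKernelPotential]
    push_cast
    ring
  have hcont : Continuous (sobKernelPotential b) :=
    continuous_iff_continuousAt.2 fun x => (hasDerivAt_sobKernelPotential b x).continuousAt
  rw [intervalIntegral.integral_eq_sub_of_hasDerivAt (fun x _ => hderiv x)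
    (hcont.intervalIntegrable 0 1), zero_sub, abs_neg, abs_of_nonneg hb.1,
    abs_of_nonneg (sub_nonneg.2 hb.2)]
  ring

/-- Proof of Lemma 2: closed form for the `L²(0,1)` inner product of two kernel
sections. -/
theorem stmt_13 (a b : ℝ) (ha : a ∈ Set.Icc (0 : ℝ) 1) (hb : b ∈ Set.Icc (0 : ℝ) 1) :
    ∫ x in (0 : ℝ)..1, sobKernel x a * sobKernel x b
      = 46/45 - a ^ 2 / 6 + a ^ 3 / 12 - a ^ 4 / 24 + a ^ 2 * b / 4 - b ^ 2 / 6
        + a * b ^ 2 / 4 - a ^ 2 * b ^ 2 / 4 + b ^ 3 / 12 - b ^ 4 / 24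
        + |a - b| ^ 3 / 12 := by
  have green := integral_sobKernel_smul_deriv_deriv ha
    (fun x _ => hasDerivAt_sobKernelPotential b x) (fun x _ => hasDerivAt_sobKernelPrimitive b x)
    ((continuous_sobKernel_left b).intervalIntegrable 0 1)
  simp only [smul_eq_mul] at green
  rw [green, integral_sobKernelPotential hb, sobKernelPrimitive_zero hb.1,
    sobKernelPrimitive_one hb.2, sobKernelPotential, sobKernel, abs_of_nonneg (sub_nonneg.2 ha.2)]
  ring
end

section
/- Fix an integer n ≥ 2, set t_k = k/n for k = 0, …, n−1, and define weights w*_0 = 6n²/(12n³ + n + 3), w*_k = 12n²/(12n³ + n + 3) for 1 ≤ k ≤ n − 2, and w*_{n-1} = 18n²/(12n³ + n + 3). Then for every function f : ℝ → ℝ that is twice continuously differentiable on [0,1], |∫_0^1 f(x) dx − ∑_{k=0}^{n-1} w*_k f(k/n)| ≤ (6n/(12n³ + n + 3)) |f'(1)| + (√(6n(n + 15)/5)/(12n³ + n + 3)) (‖f‖_{L²(0,1)} + ‖f''‖_{L²(0,1)}), where ‖g‖_{L²(0,1)} = (∫_0^1 g(x)² dx)^{1/2}. -/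
open MeasureTheory

/-- The `L²(0,1)` norm of a function `g : ℝ → ℝ`. -/
noncomputable def l2Norm (g : ℝ → ℝ) : ℝ :=
  Real.sqrt (∫ x in (0 : ℝ)..1, g x ^ 2)

/-!
With `h = 1 / n`, the optimal rule is `12 n³ / (12 n³ + n + 3)` times the rule `Q` that is
trapezoidal on `[0, 1 - h]` and evaluates the left endpoint on the last cell. On a cell `[a, b]`,
two integrations by parts against `(x - a) * (c - x)` produce the trapezoidal error for `c = b`, and
for `c = 2 * b - a` the left-endpoint error corrected by `(b - a)² / 2 * f' b`. By Cauchy–Schwarz,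
`Q f + h² / 2 * f' 1` therefore differs from `∫ f` by at most a multiple of `‖f''‖`; the damping
factor contributes the remaining `(n + 3) / (12 n³ + n + 3) * |∫ f|`.
-/

theorem sq_add_le_add_mul_add {R : Type*} [CommRing R] [LinearOrder R] [IsStrictOrderedRing R]
    {x y A B C D : R} (hA : 0 ≤ A) (hB : 0 ≤ B) (hC : 0 ≤ C) (hD : 0 ≤ D)
    (hx : x ^ 2 ≤ A * C) (hy : y ^ 2 ≤ B * D) :
    (x + y) ^ 2 ≤ (A + B) * (C + D) := by
  simpa using Finset.univ.sum_sq_le_sum_mul_sum_of_sq_le_mul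
    (r := ![x, y]) (f := ![A, B]) (g := ![C, D])
    (by simp [hA, hB]) (by simp [hC, hD]) (by simp [hx, hy])

theorem memLp_restrict_of_continuousOn {X E : Type*} [TopologicalSpace X] [MeasurableSpace X]
    [OpensMeasurableSpace X] [NormedAddCommGroup E] {μ : Measure X} [IsFiniteMeasureOnCompacts μ]
    {K : Set X} (hK : IsCompact K) (hK' : MeasurableSet K) {u : X → E} (hu : ContinuousOn u K)
    (p : ENNReal) : MemLp u p (μ.restrict K) := by
  have : IsFiniteMeasure (μ.restrict K) := ⟨by simpa using hK.measure_lt_top⟩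
  obtain ⟨C, hC⟩ := hK.exists_bound_of_continuousOn hu
  exact .of_bound (hu.aestronglyMeasurable_of_isCompact hK hK') C (ae_restrict_of_forall_mem hK' hC)

theorem memLp_restrict_Ioc_of_continuousOn {E : Type*} [NormedAddCommGroup E] {a b : ℝ}
    {u : ℝ → E} (hu : ContinuousOn u (Set.Icc a b)) (p : ENNReal) :
    MemLp u p (volume.restrict (Set.Ioc a b)) :=
  (memLp_restrict_of_continuousOn isCompact_Icc measurableSet_Icc hu p).mono_measure
    (Measure.restrict_mono_set volume Set.Ioc_subset_Icc_self)

theorem sq_integral_mul_le_integral_sq_mul_integral_sq {Ω : Type*} [MeasurableSpace Ω]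
    {μ : Measure Ω} {u v : Ω → ℝ} (hu : MemLp u 2 μ) (hv : MemLp v 2 μ) :
    (∫ x, u x * v x ∂μ) ^ 2 ≤ (∫ x, u x ^ 2 ∂μ) * ∫ x, v x ^ 2 ∂μ := by
  have inner_toLp {f g : Ω → ℝ} (hf : MemLp f 2 μ) (hg : MemLp g 2 μ) :
      inner ℝ (hf.toLp f) (hg.toLp g) = ∫ x, f x * g x ∂μ := by
    rw [L2.inner_def]
    refine integral_congr_ae ?_
    filter_upwards [hf.coeFn_toLp, hg.coeFn_toLp] with x hfx hgx
    rw [hfx, hgx, real_inner_eq_re_inner, RCLike.inner_apply', conj_trivial, RCLike.re_to_real]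
  simpa only [inner_toLp, ← sq] using real_inner_mul_inner_self_le (hu.toLp u) (hv.toLp v)

theorem sq_intervalIntegral_mul_le {a b : ℝ} (hab : a ≤ b) {u v : ℝ → ℝ}
    (hu : MemLp u 2 (volume.restrict (Set.Ioc a b)))
    (hv : MemLp v 2 (volume.restrict (Set.Ioc a b))) :
    (∫ x in a..b, u x * v x) ^ 2 ≤ (∫ x in a..b, u x ^ 2) * ∫ x in a..b, v x ^ 2 := by
  simpa only [intervalIntegral.integral_of_le hab]
    using sq_integral_mul_le_integral_sq_mul_integral_sq hu hv

theorem abs_integral_le_l2Norm {u : ℝ → ℝ} (hu : MemLp u 2 (volume.restrict (Set.Ioc 0 1))) :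
    |∫ x in (0 : ℝ)..1, u x| ≤ l2Norm u :=
  Real.abs_le_sqrt <| by
    simpa using sq_intervalIntegral_mul_le zero_le_one hu (memLp_const (1 : ℝ))

section IntegrationByParts

open Interval

theorem integral_mul_deriv_two_eq {a b : ℝ} {u u' u'' f f' f'' : ℝ → ℝ}
    (hu : ∀ x ∈ [[a, b]], HasDerivWithinAt u (u' x) [[a, b]] x)
    (hu' : ∀ x ∈ [[a, b]], HasDerivWithinAt u' (u'' x) [[a, b]] x)
    (hf : ∀ x ∈ [[a, b]], HasDerivWithinAt f (f' x) [[a, b]] x)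
    (hf' : ∀ x ∈ [[a, b]], HasDerivWithinAt f' (f'' x) [[a, b]] x)
    (hu'' : IntervalIntegrable u'' volume a b) (hf'' : IntervalIntegrable f'' volume a b) :
    ∫ x in a..b, u x * f'' x
      = u b * f' b - u a * f' a - (u' b * f b - u' a * f a) + ∫ x in a..b, u'' x * f x := by
  have intervalIntegrable_of_deriv {g g' : ℝ → ℝ}
      (hg : ∀ x ∈ [[a, b]], HasDerivWithinAt g (g' x) [[a, b]] x) :
      IntervalIntegrable g volume a b :=
    ContinuousOn.intervalIntegrable fun x hx => (hg x hx).continuousWithinAt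
  rw [intervalIntegral.integral_mul_deriv_eq_deriv_mul_of_hasDerivWithinAt hu hf'
      (intervalIntegrable_of_deriv hu') hf'',
    intervalIntegral.integral_mul_deriv_eq_deriv_mul_of_hasDerivWithinAt hu' hf hu''
      (intervalIntegrable_of_deriv hf')]
  ring

theorem integral_sub_mul_sub_mul_deriv_two {a b : ℝ} {f f' f'' : ℝ → ℝ}
    (hf : ∀ x ∈ [[a, b]], HasDerivWithinAt f (f' x) [[a, b]] x)
    (hf' : ∀ x ∈ [[a, b]], HasDerivWithinAt f' (f'' x) [[a, b]] x)
    (hf'' : IntervalIntegrable f'' volume a b) (c : ℝ) :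
    ∫ x in a..b, (x - a) * (c - x) * f'' x
      = (b - a) * (c - b) * f' b - ((a + c - 2 * b) * f b - (c - a) * f a)
        - 2 * ∫ x in a..b, f x := by
  have hu (x : ℝ) : HasDerivAt (fun y => (y - a) * (c - y)) (a + c - 2 * x) x :=
    (((hasDerivAt_id' x).sub_const a).fun_mul ((hasDerivAt_id' x).const_sub c)).congr_deriv
      (by ring)
  have hu' (x : ℝ) : HasDerivAt (fun y => a + c - 2 * y) (-2) x :=
    (((hasDerivAt_id' x).const_mul 2).const_sub (a + c)).congr_deriv (by ring)
  rw [integral_mul_deriv_two_eq (fun x _ => (hu x).hasDerivWithinAt)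
    (fun x _ => (hu' x).hasDerivWithinAt) hf hf' intervalIntegrable_const hf'',
    intervalIntegral.integral_const_mul]
  ring

theorem integral_sub_mul_sub_sq (a b c : ℝ) :
    ∫ x in a..b, ((x - a) * (c - x)) ^ 2
      = (c - a) ^ 2 * (b - a) ^ 3 / 3 - (c - a) * (b - a) ^ 4 / 2 + (b - a) ^ 5 / 5 := by
  have hderiv (x : ℝ) : HasDerivAt
      (fun y : ℝ => (c - a) ^ 2 * (y - a) ^ 3 / 3 - (c - a) * (y - a) ^ 4 / 2 + (y - a) ^ 5 / 5)
      (((x - a) * (c - x)) ^ 2) x := by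
    have hpow (k : ℕ) : HasDerivAt (fun y : ℝ => (y - a) ^ k) (k * (x - a) ^ (k - 1) * 1) x :=
      ((hasDerivAt_id' x).sub_const a).fun_pow k
    refine (((((hpow 3).const_mul ((c - a) ^ 2)).div_const 3).fun_sub
      (((hpow 4).const_mul (c - a)).div_const 2)).fun_add ((hpow 5).div_const 5)).congr_deriv ?_
    push_cast
    ring
  rw [intervalIntegral.integral_eq_sub_of_hasDerivAt (fun x _ => hderiv x)
    (Continuous.intervalIntegrable (by fun_prop) _ _)]
  ring

end IntegrationByParts

/-- The quadrature rule on `[a, a + (N + 1) * h]` that is trapezoidal on the first `N` cells of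
length `h` and evaluates the left endpoint on the last one, so that it avoids the right endpoint of
the interval. -/
noncomputable def rightOpenTrapezoidal (f : ℝ → ℝ) (N : ℕ) (a h : ℝ) : ℝ :=
  trapezoidal_integral f N a (a + N * h) + h * f (a + N * h)

theorem rightOpenTrapezoidal_succ (f : ℝ → ℝ) (N : ℕ) (a h : ℝ) :
    rightOpenTrapezoidal f (N + 1) a h
      = h * (1 / 2 * f a + ∑ k ∈ Finset.range N, f (a + (k + 1) * h)
        + 3 / 2 * f (a + (N + 1) * h)) := by
  have hstep : ((N + 1 : ℕ) * h) / (N + 1 : ℕ) = h := mul_div_cancel_left₀ h (by positivity)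
  simp only [rightOpenTrapezoidal, trapezoidal_integral, add_sub_cancel_left, mul_div_assoc, hstep,
    Nat.add_sub_cancel]
  push_cast
  ring

theorem sum_wstar_mul_eq_rightOpenTrapezoidal {n : ℕ} (hn : 2 ≤ n) (f : ℝ → ℝ) :
    ∑ k ∈ Finset.range n, wstar n k * f (k / n)
      = 12 * (n : ℝ) ^ 3 / (12 * (n : ℝ) ^ 3 + n + 3)
        * rightOpenTrapezoidal f (n - 1) 0 (1 / n) := by
  obtain ⟨m, rfl⟩ := Nat.exists_eq_add_of_le' hn
  have hinterior : ∀ k ∈ Finset.range m, wstar (m + 2) (k + 1)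
      = 12 * ((m + 2 : ℕ) : ℝ) ^ 2 / (12 * ((m + 2 : ℕ) : ℝ) ^ 3 + (m + 2 : ℕ) + 3) := by
    intro k hk
    have := Finset.mem_range.1 hk
    rw [wstar, if_neg (by omega), if_neg (by omega)]
  rw [Finset.sum_range_succ, Finset.sum_range_succ',
    Finset.sum_congr rfl fun k hk => by rw [hinterior k hk], ← Finset.mul_sum,
    wstar, if_pos rfl, wstar, if_neg (by omega), if_pos (by omega),
    show m + 2 - 1 = m + 1 from rfl, rightOpenTrapezoidal_succ]
  simp only [Nat.cast_add_one, Nat.cast_zero, zero_div, zero_add, mul_one_div]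
  have hn0 : ((m + 2 : ℕ) : ℝ) ≠ 0 := by positivity
  generalize ((m + 2 : ℕ) : ℝ) = x at *
  field_simp
  ring

/-- `f'` and `f''` are the first two derivatives of `f` on `[a, b]` (one-sided at the endpoints) and
`f''` is square integrable. The derivatives are data, so that they do not change when the interval
shrinks. -/
structure HasSqIntegrableSecondDeriv (f f' f'' : ℝ → ℝ) (a b : ℝ) : Prop where
  hasDerivWithinAt : ∀ x ∈ Set.Icc a b, HasDerivWithinAt f (f' x) (Set.Icc a b) x
  hasDerivWithinAt_deriv : ∀ x ∈ Set.Icc a b, HasDerivWithinAt f' (f'' x) (Set.Icc a b) x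
  memLp_two : MemLp f'' 2 (volume.restrict (Set.Ioc a b))

namespace HasSqIntegrableSecondDeriv

variable {f f' f'' : ℝ → ℝ} {a b c d : ℝ}

theorem of_contDiffOn (hab : a < b) (hf : ContDiffOn ℝ 2 f (Set.Icc a b)) :
    HasSqIntegrableSecondDeriv f (derivWithin f (Set.Icc a b))
      (iteratedDerivWithin 2 f (Set.Icc a b)) a b where
  hasDerivWithinAt x hx := (hf.differentiableOn two_ne_zero x hx).hasDerivWithinAt
  hasDerivWithinAt_deriv x hx := by
    have hd := hf.differentiableOn_iteratedDerivWithin (m := 1) (by norm_num)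
      (uniqueDiffOn_Icc hab) x hx
    rw [iteratedDerivWithin_succ, ← iteratedDerivWithin_one]
    exact hd.hasDerivWithinAt
  memLp_two :=
    memLp_restrict_Ioc_of_continuousOn
      (hf.continuousOn_iteratedDerivWithin le_rfl (uniqueDiffOn_Icc hab)) 2

theorem mono (hf : HasSqIntegrableSecondDeriv f f' f'' a b) (hac : a ≤ c) (hdb : d ≤ b) :
    HasSqIntegrableSecondDeriv f f' f'' c d where
  hasDerivWithinAt x hx :=
    have hsub := Set.Icc_subset_Icc hac hdb
    (hf.hasDerivWithinAt x (hsub hx)).mono hsub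
  hasDerivWithinAt_deriv x hx :=
    have hsub := Set.Icc_subset_Icc hac hdb
    (hf.hasDerivWithinAt_deriv x (hsub hx)).mono hsub
  memLp_two := hf.memLp_two.mono_measure (Measure.restrict_mono_set _ (Set.Ioc_subset_Ioc hac hdb))

theorem continuousOn (hf : HasSqIntegrableSecondDeriv f f' f'' a b) :
    ContinuousOn f (Set.Icc a b) :=
  fun x hx => (hf.hasDerivWithinAt x hx).continuousWithinAt

theorem memLp (hf : HasSqIntegrableSecondDeriv f f' f'' a b) (p : ENNReal) :
    MemLp f p (volume.restrict (Set.Ioc a b)) :=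
  memLp_restrict_Ioc_of_continuousOn hf.continuousOn p

theorem intervalIntegrable_sq (hf : HasSqIntegrableSecondDeriv f f' f'' a b) (hab : a ≤ b) :
    IntervalIntegrable (fun x => f'' x ^ 2) volume a b :=
  (intervalIntegrable_iff_integrableOn_Ioc_of_le hab).2 hf.memLp_two.integrable_sq

theorem sq_integral_sub_mul_sub_mul_le (hf : HasSqIntegrableSecondDeriv f f' f'' a b) (hab : a ≤ b)
    (c : ℝ) :
    ((b - a) * (c - b) * f' b - ((a + c - 2 * b) * f b - (c - a) * f a)
        - 2 * ∫ x in a..b, f x) ^ 2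
      ≤ (∫ x in a..b, f'' x ^ 2) *
        ((c - a) ^ 2 * (b - a) ^ 3 / 3 - (c - a) * (b - a) ^ 4 / 2 + (b - a) ^ 5 / 5) := by
  have hf'' : IntervalIntegrable f'' volume a b :=
    (intervalIntegrable_iff_integrableOn_Ioc_of_le hab).2 (hf.memLp_two.integrable one_le_two)
  have hkernel : MemLp (fun x => (x - a) * (c - x)) 2 (volume.restrict (Set.Ioc a b)) :=
    memLp_restrict_Ioc_of_continuousOn (by fun_prop) 2
  have hd := hf.hasDerivWithinAt
  have hd' := hf.hasDerivWithinAt_deriv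
  rw [← Set.uIcc_of_le hab] at hd hd'
  rw [← integral_sub_mul_sub_mul_deriv_two hd hd' hf'' c, ← integral_sub_mul_sub_sq, mul_comm]
  exact sq_intervalIntegral_mul_le hab hkernel hf.memLp_two

theorem sq_trapezoidal_error_one_le (hf : HasSqIntegrableSecondDeriv f f' f'' a b) (hab : a ≤ b) :
    trapezoidal_error f 1 a b ^ 2 ≤ (∫ x in a..b, f'' x ^ 2) * ((b - a) ^ 5 / 120) := by
  rw [trapezoidal_error, trapezoidal_integral_one]
  linear_combination (1 / 4) * hf.sq_integral_sub_mul_sub_mul_le hab b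

theorem sq_leftEndpoint_error_le (hf : HasSqIntegrableSecondDeriv f f' f'' a b) (hab : a ≤ b) :
    ((b - a) * f a + (b - a) ^ 2 / 2 * f' b - ∫ x in a..b, f x) ^ 2
      ≤ (∫ x in a..b, f'' x ^ 2) * (2 * (b - a) ^ 5 / 15) := by
  -- With `c = 2 * b - a` the kernel `(x - a) * (c - x)` is critical at `b`, so `f b` drops out.
  linear_combination (1 / 4) * hf.sq_integral_sub_mul_sub_mul_le hab (2 * b - a)

variable {N : ℕ} {h : ℝ}

theorem sq_trapezoidal_error_le (hN : 0 < N) (hh : 0 ≤ h)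
    (hf : HasSqIntegrableSecondDeriv f f' f'' a (a + N * h)) :
    trapezoidal_error f N a (a + N * h) ^ 2
      ≤ (∫ x in a..(a + N * h), f'' x ^ 2) * (N * (h ^ 5 / 120)) := by
  have hab : a ≤ a + N * h := le_add_of_nonneg_right (by positivity)
  have hcell (i : ℕ) : a + i * h ≤ a + (i + 1) * h := by gcongr; linarith
  have hf_cell {i : ℕ} (hi : i < N) :
      HasSqIntegrableSecondDeriv f f' f'' (a + i * h) (a + (i + 1) * h) :=
    hf.mono (le_add_of_nonneg_right (by positivity)) (by gcongr; exact_mod_cast hi)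
  have hsum : ∑ i ∈ Finset.range N, ∫ x in (a + i * h)..(a + (i + 1) * h), f'' x ^ 2
      = ∫ x in a..(a + N * h), f'' x ^ 2 := by
    simpa using intervalIntegral.sum_integral_adjacent_intervals (a := fun i : ℕ => a + i * h)
      fun i hi => by simpa using (hf_cell hi).intervalIntegrable_sq (hcell i)
  have hconst : ∑ _i ∈ Finset.range N, h ^ 5 / 120 = N * (h ^ 5 / 120) := by
    rw [Finset.sum_const, Finset.card_range, nsmul_eq_mul]
  rw [← sum_trapezoidal_error_adjacent_intervals hN
    (hf.continuousOn.intervalIntegrable_of_Icc hab), ← hsum, ← hconst]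
  refine Finset.sum_sq_le_sum_mul_sum_of_sq_le_mul _
    (fun i _ => intervalIntegral.integral_nonneg (hcell i) fun x _ => sq_nonneg _)
    (fun _ _ => by positivity) fun i hi => ?_
  have hlen : a + (i + 1) * h - (a + i * h) = h := by ring
  simpa only [hlen] using (hf_cell (Finset.mem_range.1 hi)).sq_trapezoidal_error_one_le (hcell i)

theorem sq_rightOpenTrapezoidal_error_le (hN : 0 < N) (hh : 0 ≤ h)
    (hf : HasSqIntegrableSecondDeriv f f' f'' a (a + (N + 1) * h)) :
    (rightOpenTrapezoidal f N a h + h ^ 2 / 2 * f' (a + (N + 1) * h)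
        - ∫ x in a..(a + (N + 1) * h), f x) ^ 2
      ≤ (∫ x in a..(a + (N + 1) * h), f'' x ^ 2) * ((N + 16) * h ^ 5 / 120) := by
  have hac : a ≤ a + N * h := le_add_of_nonneg_right (by positivity)
  have hcb : a + N * h ≤ a + (N + 1) * h := by gcongr; linarith
  have hf_init := hf.mono le_rfl hcb
  have hf_last := hf.mono hac le_rfl
  have hlen : a + (N + 1) * h - (a + N * h) = h := by ring
  have h_init := hf_init.sq_trapezoidal_error_le hN hh
  have h_last := hf_last.sq_leftEndpoint_error_le hcb
  rw [hlen] at h_last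
  rw [← intervalIntegral.integral_add_adjacent_intervals
      (hf_init.continuousOn.intervalIntegrable_of_Icc hac)
      (hf_last.continuousOn.intervalIntegrable_of_Icc hcb),
    ← intervalIntegral.integral_add_adjacent_intervals
      (hf_init.intervalIntegrable_sq hac) (hf_last.intervalIntegrable_sq hcb)]
  have hnonneg {c d : ℝ} (hcd : c ≤ d) : 0 ≤ ∫ x in c..d, f'' x ^ 2 :=
    intervalIntegral.integral_nonneg hcd fun x _ => sq_nonneg _
  calc
    _ = (trapezoidal_error f N a (a + N * h) + (h * f (a + N * h)
          + h ^ 2 / 2 * f' (a + (N + 1) * h)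
          - ∫ x in (a + N * h)..(a + (N + 1) * h), f x)) ^ 2 := by
      rw [rightOpenTrapezoidal, trapezoidal_error]
      ring
    _ ≤ ((∫ x in a..(a + N * h), f'' x ^ 2)
          + ∫ x in (a + N * h)..(a + (N + 1) * h), f'' x ^ 2)
          * (N * (h ^ 5 / 120) + 2 * h ^ 5 / 15) :=
      sq_add_le_add_mul_add (hnonneg hac) (hnonneg hcb) (by positivity) (by positivity)
        h_init h_last
    _ = _ := by ring

theorem abs_rightOpenTrapezoidal_error_le {n : ℕ} (hn : 2 ≤ n)
    (hf : HasSqIntegrableSecondDeriv f f' f'' 0 1) :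
    |rightOpenTrapezoidal f (n - 1) 0 (1 / n) + 1 / (2 * (n : ℝ) ^ 2) * f' 1
        - ∫ x in (0 : ℝ)..1, f x|
      ≤ Real.sqrt (6 * (n : ℝ) * (n + 15) / 5) / (12 * (n : ℝ) ^ 3) * l2Norm f'' := by
  have hn' : (n : ℝ) ≠ 0 := by positivity
  have hcast : ((n - 1 : ℕ) : ℝ) = n - 1 := Nat.cast_pred (by omega)
  have hend : (0 : ℝ) + ((n - 1 : ℕ) + 1) * (1 / n) = 1 := by rw [hcast]; field_simp; ring
  have hsq := sq_rightOpenTrapezoidal_error_le (N := n - 1) (h := 1 / n) (by omega) (by positivity)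
    (hend.symm ▸ hf)
  rw [hend, hcast] at hsq
  rw [l2Norm, ← Real.sqrt_sq (show 0 ≤ 12 * (n : ℝ) ^ 3 by positivity),
    ← Real.sqrt_div (by positivity), ← Real.sqrt_mul (by positivity)]
  refine Real.abs_le_sqrt ?_
  convert hsq using 1
  · congr 3
    field_simp
  · rw [mul_comm]
    congr 1
    field_simp
    ring

theorem abs_integral_sub_sum_wstar_le {n : ℕ} (hn : 2 ≤ n)
    (hf : HasSqIntegrableSecondDeriv f f' f'' 0 1) :
    |(∫ x in (0 : ℝ)..1, f x) - ∑ k ∈ Finset.range n, wstar n k * f (k / n)|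
      ≤ 6 * n / (12 * (n : ℝ) ^ 3 + n + 3) * |f' 1|
        + (n + 3) / (12 * (n : ℝ) ^ 3 + n + 3) * |∫ x in (0 : ℝ)..1, f x|
        + Real.sqrt (6 * n * (n + 15) / 5) / (12 * (n : ℝ) ^ 3 + n + 3) * l2Norm f'' := by
  have hn0 : (n : ℝ) ≠ 0 := by positivity
  have herr := hf.abs_rightOpenTrapezoidal_error_le hn
  rw [sum_wstar_mul_eq_rightOpenTrapezoidal hn]
  set D : ℝ := 12 * (n : ℝ) ^ 3 + n + 3 with hD
  set I := ∫ x in (0 : ℝ)..1, f x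
  set Q := rightOpenTrapezoidal f (n - 1) 0 (1 / n)
  set S := Real.sqrt (6 * n * (n + 15) / 5)
  have hD0 : 0 < D := by positivity
  calc
    |I - 12 * (n : ℝ) ^ 3 / D * Q|
        = |6 * n / D * f' 1 + (n + 3) / D * I
            - 12 * n ^ 3 / D * (Q + 1 / (2 * (n : ℝ) ^ 2) * f' 1 - I)| := by
      congr 1
      field_simp
      rw [hD]
      ring
    _ ≤ |6 * n / D * f' 1| + |(n + 3) / D * I|
          + |12 * n ^ 3 / D * (Q + 1 / (2 * (n : ℝ) ^ 2) * f' 1 - I)| :=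
      (abs_sub _ _).trans (add_le_add_left (abs_add_le _ _) _)
    _ = 6 * n / D * |f' 1| + (n + 3) / D * |I|
          + 12 * n ^ 3 / D * |Q + 1 / (2 * (n : ℝ) ^ 2) * f' 1 - I| := by
      simp only [abs_mul, abs_of_nonneg (show 0 ≤ 6 * n / D by positivity),
        abs_of_nonneg (show 0 ≤ (n + 3) / D by positivity),
        abs_of_nonneg (show 0 ≤ 12 * (n : ℝ) ^ 3 / D by positivity)]
    _ ≤ 6 * n / D * |f' 1| + (n + 3) / D * |I|
          + 12 * n ^ 3 / D * (S / (12 * n ^ 3) * l2Norm f'') := by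
      gcongr
    _ = 6 * n / D * |f' 1| + (n + 3) / D * |I| + S / D * l2Norm f'' := by
      field_simp

end HasSqIntegrableSecondDeriv

theorem stmt_16_general (n : ℕ) (hn : 2 ≤ n) {f f' f'' : ℝ → ℝ}
    (hf : HasSqIntegrableSecondDeriv f f' f'' 0 1) :
    |(∫ x in (0 : ℝ)..1, f x) - ∑ k ∈ Finset.range n, wstar n k * f ((k : ℝ) / n)|
      ≤ (6 * (n : ℝ) / (12 * (n : ℝ) ^ 3 + n + 3)) * |f' 1|
        + (Real.sqrt (6 * (n : ℝ) * (n + 15) / 5) / (12 * (n : ℝ) ^ 3 + n + 3)) *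
            (l2Norm f + l2Norm f'') := by
  have hn' : (2 : ℝ) ≤ n := by exact_mod_cast hn
  have hfL2 : |∫ x in (0 : ℝ)..1, f x| ≤ l2Norm f := abs_integral_le_l2Norm (hf.memLp 2)
  have hf0 : 0 ≤ l2Norm f := Real.sqrt_nonneg _
  have hn_le_sqrt : (n : ℝ) + 3 ≤ Real.sqrt (6 * n * (n + 15) / 5) :=
    Real.le_sqrt_of_sq_le (by nlinarith)
  grw [hf.abs_integral_sub_sum_wstar_le hn, hfL2, hn_le_sqrt]
  exact (by ring : _ = _).le

/-- The quantitative error bound from the proof of Lemma 2 for the optimally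
weighted one-dimensional lattice rule. -/
theorem stmt_16 (n : ℕ) (hn : 2 ≤ n) (f : ℝ → ℝ)
    (hf : ContDiffOn ℝ 2 f (Set.Icc (0 : ℝ) 1)) :
    |(∫ x in (0 : ℝ)..1, f x) - ∑ k ∈ Finset.range n, wstar n k * f ((k : ℝ) / n)|
      ≤ (6 * (n : ℝ) / (12 * (n : ℝ) ^ 3 + n + 3)) *
          |derivWithin f (Set.Icc (0 : ℝ) 1) 1|
        + (Real.sqrt (6 * (n : ℝ) * (n + 15) / 5) / (12 * (n : ℝ) ^ 3 + n + 3)) *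
            (l2Norm f + l2Norm (iteratedDerivWithin 2 f (Set.Icc (0 : ℝ) 1))) :=
  stmt_16_general n hn (.of_contDiffOn zero_lt_one hf)
end

section
/- For each integer n ≥ 2 define weights w*_0(n) = 6n²/(12n³ + n + 3), w*_k(n) = 12n²/(12n³ + n + 3) for 1 ≤ k ≤ n − 2, and w*_{n-1}(n) = 18n²/(12n³ + n + 3). Then for every function f : ℝ → ℝ that is twice continuously differentiable on [0,1], there exists a constant C > 0 such that for all integers n ≥ 2, |∫_0^1 f(x) dx − ∑_{k=0}^{n-1} w*_k(n) f(k/n)| ≤ C n^{−2}. -/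
/-!
The weights `wstar n k` are `r n / n` times `1/2, 1, …, 1, 3/2`, where
`r n = 12 n³ / (12 n³ + n + 3)`. Without the factor `r n`, this is the trapezoidal rule with `f 1`
replaced by the value at the last node `(n - 1) / n`. As `f` is Lipschitz, that value is off by
`O(1/n)`, and it carries the weight `1 / (2 n)`, so the replacement costs `O(1/n²)`, no more than
the error of the trapezoidal rule itself. Finally `1 - r n = O(1/n²)`.
-/

open Set
open scoped Interval NNReal

section Calculus

variable {𝕜 E F : Type*} [SeminormedAddCommGroup E] [NormedSpace ℝ E]

lemma norm_sub_smul_le_of_mem_Icc {r : ℝ} (hr : r ∈ Icc (0 : ℝ) 1) (x y : E) :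
    ‖x - r • y‖ ≤ ‖x - y‖ + (1 - r) * ‖x‖ :=
  calc ‖x - r • y‖ = ‖r • (x - y) + (1 - r) • x‖ := by congr 1; module
    _ ≤ ‖r • (x - y)‖ + ‖(1 - r) • x‖ := norm_add_le _ _
    _ = r * ‖x - y‖ + (1 - r) * ‖x‖ := by
      rw [norm_smul_of_nonneg hr.1, norm_smul_of_nonneg (sub_nonneg.2 hr.2)]
    _ ≤ ‖x - y‖ + (1 - r) * ‖x‖ := by
      gcongr
      exact mul_le_of_le_one_left (norm_nonneg _) hr.2

lemma exists_lipschitzOnWith_of_continuousOn_derivWithin [RCLike 𝕜] [NormedAddCommGroup F]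
    [NormedSpace 𝕜 F] {f : 𝕜 → F} {s : Set 𝕜} (hconv : Convex ℝ s) (hs : IsCompact s)
    (hf : DifferentiableOn 𝕜 f s) (hf' : ContinuousOn (derivWithin f s) s) :
    ∃ L : ℝ≥0, LipschitzOnWith L f s := by
  obtain ⟨L, hL⟩ := hs.exists_bound_of_continuousOn hf'
  refine ⟨L.toNNReal, hconv.lipschitzOnWith_of_nnnorm_derivWithin_le hf fun x hx => ?_⟩
  exact NNReal.le_toNNReal_of_coe_le (hL x hx)

lemma iteratedDerivWithin_succ_of_notMem_closure [NontriviallyNormedField 𝕜]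
    [NormedAddCommGroup F] [NormedSpace 𝕜 F] {f : 𝕜 → F} {s : Set 𝕜} {x : 𝕜} (m : ℕ)
    (hx : x ∉ closure s) : iteratedDerivWithin (m + 1) f s x = 0 := by
  rw [iteratedDerivWithin_succ, derivWithin_zero_of_notMem_closure hx]

end Calculus

section TrapezoidalRule

variable {f : ℝ → ℝ} {n : ℕ} {a b ζ : ℝ} {L : ℝ≥0}

lemma abs_trapezoidal_error_le_of_forall_mem_uIcc (hf : DifferentiableOn ℝ f [[a, b]])
    (hf' : DifferentiableOn ℝ (derivWithin f [[a, b]]) [[a, b]])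
    (hζ : ∀ x ∈ [[a, b]], |iteratedDerivWithin 2 f [[a, b]] x| ≤ ζ) (hn : 0 < n) :
    |trapezoidal_error f n a b| ≤ |b - a| ^ 3 * ζ / (12 * n ^ 2) := by
  refine trapezoidal_error_le hf hf' (fun x => ?_) hn
  by_cases hx : x ∈ [[a, b]]
  · exact hζ x hx
  · have hx' : x ∉ closure [[a, b]] := by rwa [isCompact_uIcc.isClosed.closure_eq]
    rw [iteratedDerivWithin_succ_of_notMem_closure 1 hx', abs_zero]
    exact (abs_nonneg _).trans (hζ a left_mem_uIcc)

/-- The composite trapezoidal rule on the left-Riemann nodes `a + k (b - a) / n`, `k < n`: the value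
`f b` is replaced by the value of `f` at the last node, so that the weights are `(b - a) / n` times
`1/2, 1, …, 1, 3/2`. -/
noncomputable def leftTrapezoidalIntegral (f : ℝ → ℝ) (n : ℕ) (a b : ℝ) : ℝ :=
  (b - a) / n * (∑ k ∈ Finset.range n, f (a + k * (b - a) / n) - f a / 2
    + f (a + (n - 1 : ℕ) * (b - a) / n) / 2)

lemma trapezoidal_integral_sub_leftTrapezoidalIntegral (f : ℝ → ℝ) (a b : ℝ) (hn : 0 < n) :
    trapezoidal_integral f n a b - leftTrapezoidalIntegral f n a b =
      (b - a) / (2 * n) * (f b - f (a + (n - 1 : ℕ) * (b - a) / n)) := by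
  obtain ⟨m, rfl⟩ := Nat.exists_eq_add_one.2 hn
  rw [trapezoidal_integral, leftTrapezoidalIntegral, Finset.sum_range_succ', Nat.add_sub_cancel]
  simp only [Nat.cast_succ, Nat.cast_zero, zero_mul, zero_div, add_zero]
  field_simp
  ring

lemma abs_trapezoidal_integral_sub_leftTrapezoidalIntegral_le
    (hf : LipschitzOnWith L f [[a, b]]) (hn : 0 < n) :
    |trapezoidal_integral f n a b - leftTrapezoidalIntegral f n a b| ≤
      L * (b - a) ^ 2 / (2 * n ^ 2) := by
  have hn' : (0 : ℝ) < n := Nat.cast_pos.2 hn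
  set t := a + (n - 1 : ℕ) * (b - a) / n with ht
  have hbt : b - t = (b - a) / n := by
    rw [ht, Nat.cast_pred hn]
    field_simp
    ring
  have ht_mem : t ∈ [[a, b]] := by
    have hle : ((n - 1 : ℕ) : ℝ) / n ≤ 1 :=
      (div_le_one hn').2 (Nat.cast_le.2 (Nat.sub_le n 1))
    rw [← segment_eq_uIcc, segment_eq_image']
    exact ⟨(n - 1 : ℕ) / n, ⟨by positivity, hle⟩, by simp only [smul_eq_mul, ht]; ring⟩
  have hft : |f b - f t| ≤ L * |b - t| := hf.dist_le_mul b right_mem_uIcc t ht_mem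
  calc |trapezoidal_integral f n a b - leftTrapezoidalIntegral f n a b|
      = |b - a| / (2 * n) * |f b - f t| := by
        rw [trapezoidal_integral_sub_leftTrapezoidalIntegral f a b hn, abs_mul, abs_div,
          abs_of_pos (by positivity : (0 : ℝ) < 2 * n)]
    _ ≤ |b - a| / (2 * n) * (L * (|b - a| / n)) := by
        rw [hbt, abs_div, Nat.abs_cast] at hft
        gcongr
    _ = L * (b - a) ^ 2 / (2 * n ^ 2) := by
        rw [← sq_abs (b - a)]
        field_simp

lemma abs_integral_sub_leftTrapezoidalIntegral_le (hf : DifferentiableOn ℝ f [[a, b]])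
    (hf' : DifferentiableOn ℝ (derivWithin f [[a, b]]) [[a, b]])
    (hζ : ∀ x ∈ [[a, b]], |iteratedDerivWithin 2 f [[a, b]] x| ≤ ζ)
    (hL : LipschitzOnWith L f [[a, b]]) (hn : 0 < n) :
    |(∫ x in a..b, f x) - leftTrapezoidalIntegral f n a b| ≤
      (|b - a| ^ 3 * ζ / 12 + L * (b - a) ^ 2 / 2) / n ^ 2 := by
  have htrap : |(∫ x in a..b, f x) - trapezoidal_integral f n a b| ≤
      |b - a| ^ 3 * ζ / (12 * n ^ 2) := by
    rw [abs_sub_comm]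
    exact abs_trapezoidal_error_le_of_forall_mem_uIcc hf hf' hζ hn
  rw [add_div, div_div, div_div]
  exact (abs_sub_le _ _ _).trans
    (add_le_add htrap (abs_trapezoidal_integral_sub_leftTrapezoidalIntegral_le hL hn))

end TrapezoidalRule

section OptimalWeights

variable {n : ℕ}

/-- The total mass of the weights `wstar n k`, `k < n`, for `n ≥ 2`: the factor by which they differ
from the weights of `leftTrapezoidalIntegral` on `[0, 1]`, whose total mass is `1`. -/
noncomputable def wstarMass (n : ℕ) : ℝ := 12 * (n : ℝ) ^ 3 / (12 * (n : ℝ) ^ 3 + n + 3)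

lemma wstarMass_mem_Icc (n : ℕ) : wstarMass n ∈ Icc (0 : ℝ) 1 := by
  refine ⟨by unfold wstarMass; positivity, (div_le_one (by positivity)).2 ?_⟩
  linarith [n.cast_nonneg (α := ℝ)]

lemma one_sub_wstarMass_le (hn : 0 < n) : 1 - wstarMass n ≤ 1 / (3 * n ^ 2) := by
  have hn1 : (1 : ℝ) ≤ n := Nat.one_le_cast.2 hn
  calc 1 - wstarMass n = (n + 3) / (12 * n ^ 3 + n + 3) := by
        rw [wstarMass, one_sub_div (by positivity)]
        ring
    _ ≤ 4 * n / (12 * n ^ 3) := by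
        gcongr <;> linarith
    _ = 1 / (3 * n ^ 2) := by
        field_simp
        norm_num

lemma wstar_eq_wstarMass_div_mul (hn : 2 ≤ n) (k : ℕ) :
    wstar n k = wstarMass n / n *
      (1 - (if k = 0 then 1 / 2 else 0) + (if k = n - 1 then 1 / 2 else 0)) := by
  have hmass : wstarMass n / n = 12 * (n : ℝ) ^ 2 / (12 * (n : ℝ) ^ 3 + n + 3) := by
    rw [wstarMass]
    field_simp
  rw [wstar, hmass]
  split_ifs <;> first | omega | ring

lemma sum_wstar_mul_eq (f : ℝ → ℝ) (hn : 2 ≤ n) :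
    ∑ k ∈ Finset.range n, wstar n k * f (k / n) =
      wstarMass n * leftTrapezoidalIntegral f n 0 1 := by
  have hfirst : 0 ∈ Finset.range n := Finset.mem_range.2 (by omega)
  have hlast : n - 1 ∈ Finset.range n := Finset.mem_range.2 (by omega)
  simp only [wstar_eq_wstarMass_div_mul hn, mul_assoc, ← Finset.mul_sum, add_mul, sub_mul, ite_mul,
    Finset.sum_add_distrib, Finset.sum_sub_distrib, Finset.sum_ite_eq', hfirst, hlast, if_true,
    leftTrapezoidalIntegral, one_mul, zero_mul, Nat.cast_zero, zero_div, zero_add, sub_zero,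
    mul_one]
  ring

lemma abs_integral_sub_sum_wstar_le {f : ℝ → ℝ} {ζ : ℝ} {L : ℝ≥0}
    (hf : DifferentiableOn ℝ f (Icc 0 1))
    (hf' : DifferentiableOn ℝ (derivWithin f (Icc 0 1)) (Icc 0 1))
    (hζ : ∀ x ∈ Icc (0 : ℝ) 1, |iteratedDerivWithin 2 f (Icc 0 1) x| ≤ ζ)
    (hL : LipschitzOnWith L f (Icc 0 1)) (hn : 2 ≤ n) :
    |(∫ x in (0 : ℝ)..1, f x) - ∑ k ∈ Finset.range n, wstar n k * f (k / n)| ≤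
      (ζ / 12 + L / 2 + |∫ x in (0 : ℝ)..1, f x| / 3) / n ^ 2 := by
  have hn0 : 0 < n := by omega
  rw [sum_wstar_mul_eq f hn]
  set I := ∫ x in (0 : ℝ)..1, f x
  set Q := leftTrapezoidalIntegral f n 0 1
  have hQ : |I - Q| ≤ (ζ / 12 + L / 2) / n ^ 2 := by
    rw [← uIcc_of_le (zero_le_one' ℝ)] at hf hf' hζ hL
    simpa only [sub_zero, abs_one, one_pow, one_mul, mul_one] using
      abs_integral_sub_leftTrapezoidalIntegral_le hf hf' hζ hL hn0
  calc |I - wstarMass n * Q| ≤ |I - Q| + (1 - wstarMass n) * |I| :=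
        norm_sub_smul_le_of_mem_Icc (wstarMass_mem_Icc n) I Q
    _ ≤ (ζ / 12 + L / 2) / n ^ 2 + 1 / (3 * n ^ 2) * |I| := by
        gcongr
        exact one_sub_wstarMass_le hn0
    _ = (ζ / 12 + L / 2 + |I| / 3) / n ^ 2 := by
        field_simp

end OptimalWeights

theorem stmt_17_general (f : ℝ → ℝ) (hf : DifferentiableOn ℝ f (Icc 0 1))
    (hf' : DifferentiableOn ℝ (derivWithin f (Icc 0 1)) (Icc 0 1))
    (hf'' : ∃ ζ, ∀ x ∈ Icc (0 : ℝ) 1, |iteratedDerivWithin 2 f (Icc 0 1) x| ≤ ζ) :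
    ∃ C : ℝ, 0 < C ∧ ∀ n : ℕ, 2 ≤ n →
      |(∫ x in (0 : ℝ)..1, f x) - ∑ k ∈ Finset.range n, wstar n k * f ((k : ℝ) / n)|
        ≤ C / (n : ℝ) ^ 2 := by
  obtain ⟨ζ, hζ⟩ := hf''
  obtain ⟨L, hL⟩ := exists_lipschitzOnWith_of_continuousOn_derivWithin
    (convex_Icc 0 1) isCompact_Icc hf hf'.continuousOn
  have hζ_nonneg : 0 ≤ ζ := (abs_nonneg _).trans (hζ 0 (left_mem_Icc.2 zero_le_one))
  refine ⟨ζ / 12 + L / 2 + |∫ x in (0 : ℝ)..1, f x| / 3 + 1, by positivity, fun n hn => ?_⟩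
  refine (abs_integral_sub_sum_wstar_le hf hf' hζ hL hn).trans ?_
  exact div_le_div_of_nonneg_right (le_add_of_nonneg_right zero_le_one) (by positivity)

/-- Lemma 2: the optimally weighted one-dimensional lattice rule converges at the
doubled rate `O(n^{−2})` for integrands that are `C²` on `[0,1]`. -/
theorem stmt_17 (f : ℝ → ℝ) (hf : ContDiffOn ℝ 2 f (Set.Icc (0 : ℝ) 1)) :
    ∃ C : ℝ, 0 < C ∧ ∀ n : ℕ, 2 ≤ n →
      |(∫ x in (0 : ℝ)..1, f x) - ∑ k ∈ Finset.range n, wstar n k * f ((k : ℝ) / n)|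
        ≤ C / (n : ℝ) ^ 2 := by
  have huniq : UniqueDiffOn ℝ (Icc (0 : ℝ) 1) := uniqueDiffOn_Icc zero_lt_one
  refine stmt_17_general f (hf.differentiableOn two_ne_zero)
    ((hf.derivWithin huniq one_add_one_eq_two.le).differentiableOn one_ne_zero) ?_
  exact isCompact_Icc.exists_bound_of_continuousOn
    (hf.continuousOn_iteratedDerivWithin le_rfl huniq)
end

section
/- For every integer n ≥ 1 and every continuously differentiable function f : ℝ → ℝ on [0,1], |∫_0^1 f(x) dx − (1/n) ∑_{k=0}^{n-1} f(k/n)| ≤ (1/(√3 · n)) · √((∫_0^1 f(x) dx)² + ∫_0^1 f'(x)² dx). -/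
/-!
On a panel `[a, b]`, integration by parts writes the error `∫ f - (b - a) * f a` of the
left-endpoint rule as `∫ (b - x) * f' x`, so by Cauchy–Schwarz its square is at most
`(b - a)³ / 3 * ∫ f'²`. A second, discrete, Cauchy–Schwarz sums these bounds over the panels of a
partition; `n` panels of length `1 / n` give `n * (1 / n)³ / 3 = 1 / (3 n²)`.
-/

open MeasureTheory intervalIntegral Set

theorem sq_integral_mul_le_integral_sq_mul_integral_sq_s18 {α : Type*} [MeasurableSpace α]
    {μ : Measure α} {f g : α → ℝ} (hf : MemLp f 2 μ) (hg : MemLp g 2 μ) :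
    (∫ x, f x * g x ∂μ) ^ 2 ≤ (∫ x, f x ^ 2 ∂μ) * ∫ x, g x ^ 2 ∂μ := by
  have inner_eq {u v : α → ℝ} (hu : MemLp u 2 μ) (hv : MemLp v 2 μ) :
      inner ℝ (hu.toLp u) (hv.toLp v) = ∫ x, u x * v x ∂μ := by
    rw [L2.inner_def]
    refine integral_congr_ae ?_
    filter_upwards [hu.coeFn_toLp, hv.coeFn_toLp] with x hux hvx
    rw [hux, hvx, RCLike.inner_apply', conj_trivial]
  simpa only [inner_eq, ← sq] using real_inner_mul_inner_self_le (hf.toLp f) (hg.toLp g)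

theorem integral_sub_mul_left_eq_integral_mul_deriv {f : ℝ → ℝ} {a b : ℝ}
    (hf : AbsolutelyContinuousOnInterval f a b) :
    (∫ x in a..b, f x) - (b - a) * f a = ∫ x in a..b, (b - x) * deriv f x := by
  have h_weight : AbsolutelyContinuousOnInterval (fun x => b - x) a b :=
    ContDiffOn.absolutelyContinuousOnInterval (by fun_prop)
  have h_deriv : deriv (fun x : ℝ => b - x) = fun _ => -1 := by
    ext x
    simp
  rw [h_weight.integral_mul_deriv_eq_deriv_mul hf, h_deriv]
  simp only [neg_one_mul, intervalIntegral.integral_neg]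
  ring

theorem integral_right_sub_sq (a b : ℝ) : ∫ x in a..b, (b - x) ^ 2 = (b - a) ^ 3 / 3 := by
  rw [integral_comp_sub_left (fun x => x ^ 2) b, integral_pow]
  norm_num

theorem sq_integral_sub_mul_left_le {f : ℝ → ℝ} {a b : ℝ} (hab : a ≤ b)
    (hf : AbsolutelyContinuousOnInterval f a b)
    (hf' : IntervalIntegrable (fun x => deriv f x ^ 2) volume a b) :
    ((∫ x in a..b, f x) - (b - a) * f a) ^ 2
      ≤ (b - a) ^ 3 / 3 * ∫ x in a..b, deriv f x ^ 2 := by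
  have h_weight : MemLp (fun x => b - x) 2 (volume.restrict (Ioc a b)) :=
    (memLp_two_iff_integrable_sq (by fun_prop)).2
      (Continuous.intervalIntegrable (by fun_prop) a b).1
  have h_deriv : MemLp (deriv f) 2 (volume.restrict (Ioc a b)) :=
    (memLp_two_iff_integrable_sq (measurable_deriv f).aestronglyMeasurable).2 hf'.1
  rw [integral_sub_mul_left_eq_integral_mul_deriv hf, ← integral_right_sub_sq]
  simpa only [integral_of_le hab] using
    sq_integral_mul_le_integral_sq_mul_integral_sq_s18 h_weight h_deriv

theorem sq_integral_sub_leftRiemannSum_le {f : ℝ → ℝ} {u : ℕ → ℝ} (hu : Monotone u) (n : ℕ)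
    (hf : AbsolutelyContinuousOnInterval f (u 0) (u n))
    (hf' : IntervalIntegrable (fun x => deriv f x ^ 2) volume (u 0) (u n)) :
    ((∫ x in u 0..u n, f x) - ∑ k ∈ Finset.range n, (u (k + 1) - u k) * f (u k)) ^ 2
      ≤ (∑ k ∈ Finset.range n, (u (k + 1) - u k) ^ 3 / 3) * ∫ x in u 0..u n, deriv f x ^ 2 := by
  have h_panel {k : ℕ} (hk : k < n) : uIcc (u k) (u (k + 1)) ⊆ uIcc (u 0) (u n) := by
    rw [uIcc_of_le (hu k.le_succ), uIcc_of_le (hu n.zero_le)]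
    exact Icc_subset_Icc (hu k.zero_le) (hu hk)
  have h_split_f : ∑ k ∈ Finset.range n, ∫ x in u k..u (k + 1), f x = ∫ x in u 0..u n, f x :=
    sum_integral_adjacent_intervals fun k hk =>
      (hf.mono (h_panel hk)).continuousOn.intervalIntegrable
  have h_split_deriv : ∑ k ∈ Finset.range n, ∫ x in u k..u (k + 1), deriv f x ^ 2
      = ∫ x in u 0..u n, deriv f x ^ 2 :=
    sum_integral_adjacent_intervals fun k hk => hf'.mono_set (h_panel hk)
  rw [← h_split_f, ← h_split_deriv, ← Finset.sum_sub_distrib]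
  refine Finset.sum_sq_le_sum_mul_sum_of_sq_le_mul _ (fun k _ => ?_) (fun k _ => ?_)
    fun k hk => ?_
  · have : 0 ≤ u (k + 1) - u k := sub_nonneg.2 (hu k.le_succ)
    positivity
  · exact integral_nonneg (hu k.le_succ) fun x _ => sq_nonneg _
  · have h_sub := h_panel (Finset.mem_range.1 hk)
    exact sq_integral_sub_mul_left_le (hu k.le_succ) (hf.mono h_sub) (hf'.mono_set h_sub)

theorem sq_integral_sub_uniform_leftRiemannSum_le {f : ℝ → ℝ} {a b : ℝ} (hab : a ≤ b) {n : ℕ}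
    (hn : n ≠ 0) (hf : AbsolutelyContinuousOnInterval f a b)
    (hf' : IntervalIntegrable (fun x => deriv f x ^ 2) volume a b) :
    ((∫ x in a..b, f x) - (b - a) / n * ∑ k ∈ Finset.range n, f (a + k * ((b - a) / n))) ^ 2
      ≤ (b - a) ^ 3 / (3 * n ^ 2) * ∫ x in a..b, deriv f x ^ 2 := by
  let u (k : ℕ) : ℝ := a + k * ((b - a) / n)
  have hu : Monotone u := fun i j hij => by
    have : 0 ≤ b - a := sub_nonneg.2 hab
    dsimp only [u]
    gcongr
  have h_zero : u 0 = a := by simp [u]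
  have h_last : u n = b := by
    dsimp only [u]
    field_simp
    ring
  have h_step (k : ℕ) : u (k + 1) - u k = (b - a) / n := by
    dsimp only [u]
    push_cast
    ring
  have h_weight : n * (((b - a) / n) ^ 3 / 3) = (b - a) ^ 3 / (3 * n ^ 2) := by
    field_simp
  have h := sq_integral_sub_leftRiemannSum_le (f := f) hu n
    (by rwa [h_zero, h_last]) (by rwa [h_zero, h_last])
  simpa only [h_zero, h_last, h_step, ← Finset.mul_sum, Finset.sum_const, Finset.card_range,
    nsmul_eq_mul, h_weight] using h

theorem stmt_18_general (n : ℕ) (hn : 1 ≤ n) (f : ℝ → ℝ)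
    (hf : AbsolutelyContinuousOnInterval f 0 1)
    (hf' : IntervalIntegrable (fun x => derivWithin f (Icc (0 : ℝ) 1) x ^ 2) volume 0 1) :
    |(∫ x in (0 : ℝ)..1, f x) - (1 / (n : ℝ)) * ∑ k ∈ Finset.range n, f ((k : ℝ) / n)|
      ≤ (1 / (Real.sqrt 3 * n)) *
          Real.sqrt (∫ x in (0 : ℝ)..1, derivWithin f (Icc (0 : ℝ) 1) x ^ 2) := by
  have h_deriv : EqOn (fun x => derivWithin f (Icc (0 : ℝ) 1) x ^ 2) (fun x => deriv f x ^ 2)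
      (uIoo 0 1) := fun x hx => by
    rw [uIoo_of_le zero_le_one] at hx
    simp only [derivWithin_of_mem_nhds (Icc_mem_nhds hx.1 hx.2)]
  have h_sq := sq_integral_sub_uniform_leftRiemannSum_le zero_le_one
    (Nat.one_le_iff_ne_zero.1 hn) hf (hf'.congr_uIoo h_deriv)
  simp only [sub_zero, zero_add, one_pow, mul_one_div] at h_sq
  have h_const : 1 / (√3 * n) = √(1 / (3 * (n : ℝ) ^ 2)) := by
    rw [Real.sqrt_div zero_le_one, Real.sqrt_one, Real.sqrt_mul zero_le_three,
      Real.sqrt_sq n.cast_nonneg]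
  rw [integral_congr_uIoo h_deriv, h_const, ← Real.sqrt_mul (by positivity)]
  exact Real.abs_le_sqrt h_sq

/-- The `O(n^{−1})` bound for the equally weighted one-dimensional lattice
(left-Riemann) rule: `|I f − Q_T f| ≤ (1/(√3 n)) ‖f‖_{H¹_{1,1}}`, where the
Sobolev norm is `√((∫_0^1 f)² + ∫_0^1 (f')²)`. -/
theorem stmt_18 (n : ℕ) (hn : 1 ≤ n) (f : ℝ → ℝ)
    (hf : ContDiffOn ℝ 1 f (Set.Icc (0 : ℝ) 1)) :
    |(∫ x in (0 : ℝ)..1, f x) - (1 / (n : ℝ)) * ∑ k ∈ Finset.range n, f ((k : ℝ) / n)|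
      ≤ (1 / (Real.sqrt 3 * n)) *
          Real.sqrt ((∫ x in (0 : ℝ)..1, f x) ^ 2
            + ∫ x in (0 : ℝ)..1, derivWithin f (Set.Icc (0 : ℝ) 1) x ^ 2) := by
  have h_deriv := hf.continuousOn_derivWithin (uniqueDiffOn_Icc zero_lt_one) le_rfl
  rw [← uIcc_of_le zero_le_one] at hf
  refine (stmt_18_general n hn f hf.absolutelyContinuousOnInterval
    ((h_deriv.pow 2).intervalIntegrable_of_Icc zero_le_one)).trans ?_
  gcongr
  exact le_add_of_nonneg_left (sq_nonneg _)
end
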